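/- Let q be a power of a prime p, let k, f be positive integers with f | k and k > f > 1, and let D = {x ∈ F_{q^k}^* : Tr_{q^f/q}(x^{(q^k-1)/(q^f-1)}) = 0}. Then for every b ∈ F_{q^k}^*, the Hamming weight w(c_b) = #{d ∈ D : Tr_{q^k/q}(b d) ≠ 0} satisfies w(c_b) ≥ (q-1)(q^f - q)(q^{k-2} − q^{(k+f-4)/2})/(q^f - 1), and this lower bound is strictly positive; in particular every b ∈ F_{q^k}^* gives a nonzero codeword, so the code C_D has dimension k over F_q. -/

import Mathlib

/-!
For a tower `K / E / F`, the set `D` of units of `K` whose norm to `E` has trace zero over `F` is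
stable under the group `H` of units whose norm to `E` lies in `F`, and the weight of `c_b` is an
affine function of the Fourier transform at `b` of the indicator function of `D`. Subtracting the
density of `D` from this indicator gives a transform `T` that vanishes at `0`, has sum `0`, is
constant on the cosets of `H`, and has an `ℓ²` norm given by Parseval. As the mass of `T` on `b H`
has to be cancelled outside of `b H`, Cauchy–Schwarz on the complement of `b H` bounds `|T b|` in
terms of the index `(#E - 1) / (#F - 1)` of `H`.
-/

section General

open Finset

@[to_additive]
theorem dens_filter_monoidHom_comp {A B : Type*} [Group A] [Group B] [Fintype A] [Fintype B]
    (N : A →* B) (hN : Function.Surjective N) (p : B → Prop) [DecidablePred p] :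
    ({a | p (N a)} : Finset A).dens = ({b | p b} : Finset B).dens := by
  have hA (b : B) : #{a | p (N a * b)} = #{a | p (N a)} := by
    obtain ⟨a', rfl⟩ := hN b
    exact card_equiv (Equiv.mulRight a') (by simp)
  have hB (a : A) : #{b | p (N a * b)} = #{b | p b} :=
    card_equiv (Equiv.mulLeft (N a)) (by simp)
  have hcount : Fintype.card A * #{b | p b} = Fintype.card B * #{a | p (N a)} := by
    simpa [bipartiteAbove, bipartiteBelow, hA, hB] using
      sum_card_bipartiteAbove_eq_sum_card_bipartiteBelow (s := univ) (t := univ)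
        fun a b ↦ p (N a * b)
  rw [dens_eq_card_div_card, dens_eq_card_div_card,
    div_eq_div_iff (by simp) (by simp), mul_comm, mul_comm (#{b | p b} : ℚ≥0)]
  exact_mod_cast hcount.symm

theorem sum_eq_zero_add_sum_units {G₀ M : Type*} [GroupWithZero G₀] [Fintype G₀] [DecidableEq G₀]
    [AddCommMonoid M] (f : G₀ → M) : ∑ x, f x = f 0 + ∑ u : G₀ˣ, f u := by
  rw [Fintype.sum_eq_add_sum_subtype_ne f 0,
    ← Equiv.sum_comp unitsEquivNeZero fun x : {x : G₀ // x ≠ 0} ↦ f x]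
  rfl

theorem card_filter_eq_add_card_filter_units {G₀ : Type*} [GroupWithZero G₀] [Fintype G₀]
    [DecidableEq G₀] (p : G₀ → Prop) [DecidablePred p] :
    #{x | p x} = (if p 0 then 1 else 0) + #{u : G₀ˣ | p u} := by
  rw [card_filter, card_filter, sum_eq_zero_add_sum_units]

theorem card_mul_card_mul_norm_sq_le {ι E : Type*} [Fintype ι] [SeminormedAddCommGroup E]
    [NormedSpace ℝ E] {g : ι → E} (hg : ∑ i, g i = 0) (s : Finset ι) {c : E}
    (hc : ∀ i ∈ s, g i = c) :
    (Fintype.card ι : ℝ) * #s * ‖c‖ ^ 2 ≤ (Fintype.card ι - #s) * ∑ i, ‖g i‖ ^ 2 := by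
  classical
  have hsum : ‖∑ i ∈ sᶜ, g i‖ = #s * ‖c‖ := by
    have : (#s : ℝ) • c + ∑ i ∈ sᶜ, g i = 0 := by
      rw [← hg, ← sum_add_sum_compl s, sum_congr rfl hc, sum_const, Nat.cast_smul_eq_nsmul]
    rw [eq_neg_of_add_eq_zero_right this, norm_neg, norm_smul, Real.norm_natCast]
  have hsq : ∑ i, ‖g i‖ ^ 2 = #s * ‖c‖ ^ 2 + ∑ i ∈ sᶜ, ‖g i‖ ^ 2 := by
    rw [← sum_add_sum_compl s, sum_congr rfl fun i hi ↦ by rw [hc i hi], sum_const, nsmul_eq_mul]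
  have hcard : (#sᶜ : ℝ) = Fintype.card ι - #s := by
    rw [card_compl, Nat.cast_sub (card_le_univ s)]
  have hcs : (#s * ‖c‖) ^ 2 ≤ (Fintype.card ι - #s) * ∑ i ∈ sᶜ, ‖g i‖ ^ 2 :=
    calc (#s * ‖c‖) ^ 2 ≤ (∑ i ∈ sᶜ, ‖g i‖) ^ 2 := by
          rw [← hsum]; gcongr; exact norm_sum_le _ _
      _ ≤ #sᶜ * ∑ i ∈ sᶜ, ‖g i‖ ^ 2 := sq_sum_le_card_mul_sum_sq
      _ = _ := by rw [hcard]
  rw [hsq]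
  linear_combination hcs

/-- The indicator function of `D` with its mean value subtracted. -/
def balancedIndicator {α : Type*} [Fintype α] [DecidableEq α] (D : Finset α) (x : α) : ℂ :=
  (if x ∈ D then 1 else 0) - (D.dens : ℂ)

theorem sum_balancedIndicator {α : Type*} [Fintype α] [DecidableEq α] (D : Finset α) :
    ∑ x, balancedIndicator D x = 0 := by
  simp [balancedIndicator]

theorem sum_norm_balancedIndicator_sq {α : Type*} [Fintype α] [DecidableEq α] (D : Finset α) :
    ∑ x, ‖balancedIndicator D x‖ ^ 2 = Fintype.card α * (D.dens * (1 - D.dens) : ℝ) := by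
  have hterm (x : α) : ‖balancedIndicator D x‖ ^ 2 =
      (if x ∈ D then (1 - 2 * D.dens : ℝ) else 0) + (D.dens : ℝ) ^ 2 := by
    have hcast : balancedIndicator D x = (((if x ∈ D then 1 else 0) - D.dens : ℝ) : ℂ) := by
      simp [balancedIndicator, apply_ite]
    rw [hcast, Complex.norm_real, Real.norm_eq_abs, sq_abs]
    split_ifs <;> ring
  have hcard : (#D : ℝ) = Fintype.card α * D.dens := by simp
  simp_rw [hterm, sum_add_distrib, sum_ite_mem, univ_inter, sum_const, nsmul_eq_mul, card_univ]
  rw [hcard]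
  ring

end General

section Transform

open Finset

variable {R : Type*} [CommRing R] [Fintype R] [DecidableEq R]

/-- The Fourier transform, with respect to the additive character `ψ`, of a function on the unit
group of a finite ring, extended by zero to the whole ring. -/
noncomputable def unitTransform (ψ : AddChar R ℂ) (f : Rˣ → ℂ) (b : R) : ℂ :=
  ∑ u, f u * ψ (b * u)

theorem unitTransform_zero (ψ : AddChar R ℂ) (f : Rˣ → ℂ) :
    unitTransform ψ f 0 = ∑ u, f u := by
  simp [unitTransform]

theorem unitTransform_mul_unit (ψ : AddChar R ℂ) {f : Rˣ → ℂ} {z : Rˣ}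
    (hf : ∀ u, f (z * u) = f u) (b : R) :
    unitTransform ψ f (b * z) = unitTransform ψ f b := by
  rw [unitTransform, unitTransform, ← Equiv.sum_comp (Equiv.mulLeft z) fun u ↦ f u * ψ (b * u)]
  simp [hf, mul_assoc]

theorem sum_unitTransform [Nontrivial R] {ψ : AddChar R ℂ} (hψ : ψ.IsPrimitive) (f : Rˣ → ℂ) :
    ∑ b, unitTransform ψ f b = 0 := by
  simp [unitTransform, sum_comm (s := (univ : Finset R)), ← mul_sum, AddChar.sum_mulShift _ hψ]

theorem sum_norm_unitTransform_sq {ψ : AddChar R ℂ} (hψ : ψ.IsPrimitive) (f : Rˣ → ℂ) :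
    ∑ b, ‖unitTransform ψ f b‖ ^ 2 = Fintype.card R * ∑ u, ‖f u‖ ^ 2 := by
  have horth (u v : Rˣ) : ∑ b, ψ (b * (v - u)) = if u = v then (Fintype.card R : ℂ) else 0 := by
    rw [AddChar.sum_mulShift _ hψ]
    simp [sub_eq_zero, eq_comm (a := u), Units.ext_iff]
  have hexpand (b : R) : (‖unitTransform ψ f b‖ : ℂ) ^ 2 =
      ∑ u, ∑ v, starRingEnd ℂ (f u) * f v * ψ (b * (v - u)) := by
    rw [← Complex.conj_mul', unitTransform, map_sum, sum_mul_sum]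
    refine sum_congr rfl fun u _ ↦ sum_congr rfl fun v _ ↦ ?_
    rw [map_mul, ← AddChar.map_neg_eq_conj, mul_sub, sub_eq_neg_add, AddChar.map_add_eq_mul]
    ring
  have hcomplex : ∑ b, (‖unitTransform ψ f b‖ : ℂ) ^ 2 =
      Fintype.card R * ∑ u, (‖f u‖ : ℂ) ^ 2 :=
    calc ∑ b, (‖unitTransform ψ f b‖ : ℂ) ^ 2
        = ∑ u, ∑ v, starRingEnd ℂ (f u) * f v * ∑ b, ψ (b * (v - u)) := by
          simp_rw [hexpand, mul_sum]
          rw [sum_comm]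
          exact sum_congr rfl fun u _ ↦ sum_comm
      _ = Fintype.card R * ∑ u, (‖f u‖ : ℂ) ^ 2 := by
          simp [horth, ← Complex.conj_mul', mul_sum, mul_comm]
  exact_mod_cast hcomplex

end Transform

section FieldTransform

open Finset

variable {K : Type*} [Field K] [Fintype K] [DecidableEq K] {ψ : AddChar K ℂ}

theorem sum_addChar_mul_units (hψ : ψ.IsPrimitive) (b : Kˣ) : ∑ u : Kˣ, ψ (b * u) = -1 := by
  have h := sum_eq_zero_add_sum_units fun x ↦ ψ (x * b)
  rw [AddChar.sum_mulShift _ hψ, if_neg b.ne_zero, zero_mul, AddChar.map_zero_eq_one] at h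
  simp_rw [mul_comm (b : K)]
  push_cast at h
  exact eq_neg_of_add_eq_zero_right h.symm

theorem unitTransform_balancedIndicator (hψ : ψ.IsPrimitive) (D : Finset Kˣ) (b : Kˣ) :
    unitTransform ψ (balancedIndicator D) b = ∑ d ∈ D, ψ (b * d) + D.dens := by
  simp [unitTransform, balancedIndicator, sub_mul, ← mul_sum, sum_addChar_mul_units hψ]

theorem card_units_mul_norm_unitTransform_sq_le (hψ : ψ.IsPrimitive) {H : Subgroup Kˣ}
    {f : Kˣ → ℂ} (hf : ∀ z ∈ H, ∀ u, f (z * u) = f u) (hf0 : ∑ u, f u = 0) (b : Kˣ) :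
    (Fintype.card Kˣ : ℝ) * ‖unitTransform ψ f b‖ ^ 2 ≤
      (H.index - 1) * (Fintype.card K * ∑ u, ‖f u‖ ^ 2) := by
  classical
  have hsum : ∑ u : Kˣ, unitTransform ψ f u = 0 := by
    have h := sum_eq_zero_add_sum_units (unitTransform ψ f)
    rwa [sum_unitTransform hψ, unitTransform_zero, hf0, zero_add, eq_comm] at h
  have hsq : ∑ u : Kˣ, ‖unitTransform ψ f u‖ ^ 2 = Fintype.card K * ∑ u, ‖f u‖ ^ 2 := by
    rw [← sum_norm_unitTransform_sq hψ, sum_eq_zero_add_sum_units (G₀ := K), unitTransform_zero,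
      hf0]
    simp
  have hcoset : ∀ u ∈ ({z | z ∈ H} : Finset Kˣ).image (b * ·),
      unitTransform ψ f u = unitTransform ψ f b := by
    simp only [mem_image, mem_filter_univ, forall_exists_index, and_imp]
    rintro _ z hz rfl
    rw [Units.val_mul, unitTransform_mul_unit ψ (hf z hz)]
  have hcard : #(({z | z ∈ H} : Finset Kˣ).image (b * ·)) = Nat.card H := by
    rw [card_image_of_injective _ (mul_right_injective b), Nat.card_eq_fintype_card,
      Fintype.card_subtype]
  have hindex : (Fintype.card Kˣ : ℝ) = Nat.card H * H.index := by
    rw [← Nat.card_eq_fintype_card, ← H.card_mul_index, Nat.cast_mul]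
  have h := card_mul_card_mul_norm_sq_le hsum _ hcoset
  rw [hcard, hsq] at h
  refine le_of_mul_le_mul_left ?_ (Nat.cast_pos.2 (Nat.card_pos (α := H)))
  linear_combination h + (Fintype.card K * ∑ u, ‖f u‖ ^ 2) * hindex

end FieldTransform

section TraceCode

open Finset

variable {F K : Type*} [Field F] [Field K] [Algebra F K]

/-- The Hamming weight of the codeword `(Tr_{K/F}(b d))_{d ∈ D}` of the trace code with defining
set `D`. -/
noncomputable def traceWeight (F : Type*) {K : Type*} [Field F] [DecidableEq F] [Field K]
    [Algebra F K] (D : Finset Kˣ) (b : K) : ℕ :=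
  #(D.filter fun d : Kˣ ↦ Algebra.trace F K (b * d) ≠ 0)

/-- The lift `ψ ∘ Tr_{K/F}` of an additive character `ψ` of `F` to an extension `K`. -/
noncomputable def traceChar (K : Type*) [Field K] [Algebra F K] (ψ : AddChar F ℂ) : AddChar K ℂ :=
  ψ.compAddMonoidHom (Algebra.trace F K).toAddMonoidHom

theorem traceChar_apply (ψ : AddChar F ℂ) (x : K) :
    traceChar K ψ x = ψ (Algebra.trace F K x) :=
  rfl

theorem isPrimitive_traceChar [FiniteDimensional F K] [Algebra.IsSeparable F K]
    {ψ : AddChar F ℂ} (hψ : ψ.IsPrimitive) : (traceChar K ψ).IsPrimitive := by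
  obtain ⟨t, ht⟩ := AddChar.ne_one_iff.1 (hψ one_ne_zero)
  obtain ⟨x, rfl⟩ := Algebra.trace_surjective F K t
  refine AddChar.IsPrimitive.of_ne_one (AddChar.ne_one_iff.2 ⟨x, ?_⟩)
  simpa [traceChar_apply] using ht

variable [Fintype F] [DecidableEq F]

theorem card_mul_traceWeight_add_sum {ψ : AddChar F ℂ} (hψ : ψ.IsPrimitive) (D : Finset Kˣ)
    (b : K) :
    (Fintype.card F : ℂ) * traceWeight F D b +
      ∑ c : F, ∑ d ∈ D, traceChar K ψ (algebraMap F K c * (b * d)) = Fintype.card F * #D := by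
  have horth (d : Kˣ) : ∑ c : F, traceChar K ψ (algebraMap F K c * (b * d)) =
      if Algebra.trace F K (b * d) = 0 then (Fintype.card F : ℂ) else 0 := by
    simp_rw [traceChar_apply, ← Algebra.smul_def, map_smul, smul_eq_mul]
    exact_mod_cast AddChar.sum_mulShift _ hψ
  rw [sum_comm,
    ← card_filter_add_card_filter_not (s := D) fun d : Kˣ ↦ Algebra.trace F K (b * d) = 0]
  simp [horth, traceWeight, ← sum_filter]
  ring

theorem card_mul_traceWeight {ψ : AddChar F ℂ} (hψ : ψ.IsPrimitive) {D : Finset Kˣ}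
    (hD : ∀ (c : Fˣ) (d : Kˣ), Units.map (algebraMap F K : F →* K) c * d ∈ D ↔ d ∈ D) (b : K) :
    (Fintype.card F : ℂ) * traceWeight F D b =
      (Fintype.card F - 1) * (#D - ∑ d ∈ D, traceChar K ψ (b * d)) := by
  have hscale (c : Fˣ) : ∑ d ∈ D, traceChar K ψ (algebraMap F K c * (b * d)) =
      ∑ d ∈ D, traceChar K ψ (b * d) :=
    sum_equiv (Equiv.mulLeft (Units.map (algebraMap F K : F →* K) c)) (by simp [hD])
      (by simp [mul_left_comm])
  have hcard : (Fintype.card F : ℂ) = Fintype.card Fˣ + 1 := by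
    exact_mod_cast Fintype.card_eq_card_units_add_one (α := F)
  have h := card_mul_traceWeight_add_sum hψ D b
  rw [sum_eq_zero_add_sum_units] at h
  simp only [hscale, map_zero, zero_mul, AddChar.map_zero_eq_one, sum_const, nsmul_eq_mul, mul_one,
    card_univ] at h
  linear_combination h + (∑ d ∈ D, traceChar K ψ (b * d)) * hcard

variable [Fintype K] [DecidableEq K]

theorem card_mul_traceWeight_eq_unitTransform {ψ : AddChar F ℂ} (hψ : ψ.IsPrimitive)
    {D : Finset Kˣ}
    (hD : ∀ (c : Fˣ) (d : Kˣ), Units.map (algebraMap F K : F →* K) c * d ∈ D ↔ d ∈ D) (b : Kˣ) :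
    (Fintype.card F : ℂ) * traceWeight F D b = (Fintype.card F - 1) *
      (Fintype.card K * D.dens - unitTransform (traceChar K ψ) (balancedIndicator D) b) := by
  have hcard : (#D : ℂ) = (Fintype.card K - 1) * D.dens := by
    rw [Fintype.card_eq_card_units_add_one (α := K)]
    simp
  rw [card_mul_traceWeight hψ hD, unitTransform_balancedIndicator (isPrimitive_traceChar hψ), hcard]
  ring

theorem traceWeight_deviation_sq_le {H : Subgroup Kˣ}
    (hF : (Units.map (algebraMap F K : F →* K)).range ≤ H) {D : Finset Kˣ}
    (hD : ∀ z ∈ H, ∀ d, z * d ∈ D ↔ d ∈ D) (b : Kˣ) :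
    (Fintype.card F * traceWeight F D (b : K) -
        (Fintype.card F - 1) * Fintype.card K * D.dens : ℝ) ^ 2 ≤
      (Fintype.card F - 1) ^ 2 * ((H.index - 1) * Fintype.card K * (D.dens * (1 - D.dens))) := by
  set ψ := AddChar.FiniteField.primitiveChar_to_Complex F
  have hψ : ψ.IsPrimitive := AddChar.FiniteField.primitiveChar_to_Complex_isPrimitive F
  set T := unitTransform (traceChar K ψ) (balancedIndicator D) b
  have hweight : (Fintype.card F : ℂ) * traceWeight F D (b : K) = (Fintype.card F - 1) *
      (Fintype.card K * D.dens - T) :=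
    card_mul_traceWeight_eq_unitTransform hψ (fun c ↦ hD _ (hF ⟨c, rfl⟩)) b
  have hdev : ((Fintype.card F * traceWeight F D (b : K) -
      (Fintype.card F - 1) * Fintype.card K * D.dens : ℝ) : ℂ) =
      -((Fintype.card F - 1 : ℝ) * T) := by
    simp only [Complex.ofReal_sub, Complex.ofReal_mul, Complex.ofReal_natCast, Complex.ofReal_one,
      Complex.ofReal_nnratCast]
    linear_combination hweight
  have hT : (Fintype.card Kˣ : ℝ) * ‖T‖ ^ 2 ≤
      (H.index - 1) * (Fintype.card K * (Fintype.card Kˣ * (D.dens * (1 - D.dens)))) := by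
    rw [← sum_norm_balancedIndicator_sq]
    exact card_units_mul_norm_unitTransform_sq_le (isPrimitive_traceChar hψ)
      (fun z hz u ↦ by simp [balancedIndicator, hD z hz]) (sum_balancedIndicator D) b
  rw [← sq_abs, ← Real.norm_eq_abs, ← Complex.norm_real, hdev, norm_neg, norm_mul, mul_pow,
    Complex.norm_real, Real.norm_eq_abs, sq_abs]
  gcongr
  refine le_of_mul_le_mul_left ?_ (Nat.cast_pos.2 (Fintype.card_pos (α := Kˣ)))
  linear_combination hT

end TraceCode

section NormTrace

open Finset

variable (F E K : Type*) [Field F] [Field E] [Field K] [Algebra F E] [Algebra E K]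

/-- The units of `K` whose norm to `E` lies in `F`. The defining set of the code is a union of
cosets of this group, so the weight of `c_b` depends only on the coset of `b`. -/
noncomputable def normScalarSubgroup : Subgroup Kˣ :=
  (Units.map (algebraMap F E : F →* E)).range.comap (Units.map (Algebra.norm E (S := K)))

theorem range_unitsMap_algebraMap_le_normScalarSubgroup [Algebra F K] [IsScalarTower F E K] :
    (Units.map (algebraMap F K : F →* K)).range ≤ normScalarSubgroup F E K := by
  rintro _ ⟨c, rfl⟩
  refine ⟨c ^ Module.finrank E K, Units.ext ?_⟩
  simp [IsScalarTower.algebraMap_apply F E K, Algebra.norm_algebraMap]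

/-- The defining set `{x ∈ Kˣ | Tr_{E/F}(N_{K/E}(x)) = 0}` of the code, as a set of units of `K`.
The paper writes the norm as the power `x ^ ((#K - 1) / (#E - 1))`. -/
noncomputable def normTraceZero [DecidableEq F] [Fintype K] [DecidableEq K] : Finset Kˣ :=
  {u | Algebra.trace F E (Algebra.norm E (u : K)) = 0}

theorem traceWeight_normTraceZero [Algebra F K] [DecidableEq F] [Fintype K] [DecidableEq K]
    (b : K) : traceWeight F (normTraceZero F E K) b =
    Nat.card {d : K // (d ≠ 0 ∧ Algebra.trace F E (Algebra.norm E d) = 0) ∧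
      Algebra.trace F K (b * d) ≠ 0} := by
  rw [Nat.card_eq_fintype_card, Fintype.card_subtype, card_filter_eq_add_card_filter_units]
  simp [traceWeight, normTraceZero, filter_filter]

variable {F E K} in
theorem mul_mem_normTraceZero_iff [DecidableEq F] [Fintype K] [DecidableEq K] {z : Kˣ}
    (hz : z ∈ normScalarSubgroup F E K) (u : Kˣ) :
    z * u ∈ normTraceZero F E K ↔ u ∈ normTraceZero F E K := by
  obtain ⟨c, hc⟩ := hz
  have hnorm : Algebra.norm E (z : K) = algebraMap F E c := congrArg Units.val hc.symm
  simp [normTraceZero, hnorm, ← Algebra.smul_def]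

variable [Fintype F] [Fintype E]

theorem index_normScalarSubgroup_mul [Finite K] :
    ((normScalarSubgroup F E K).index : ℝ) * (Fintype.card F - 1) = Fintype.card E - 1 := by
  have hinj : Function.Injective (Units.map (algebraMap F E : F →* E)) :=
    Units.map_injective (algebraMap F E).injective
  have hrange : Nat.card (Units.map (algebraMap F E : F →* E)).range = Nat.card Fˣ :=
    Nat.card_congr (MonoidHom.ofInjective hinj).symm.toEquiv
  have hindex : (normScalarSubgroup F E K).index * Nat.card Fˣ = Nat.card Eˣ := by
    rw [normScalarSubgroup, Subgroup.index_comap_of_surjective _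
      (FiniteField.unitsMap_norm_surjective E K), ← hrange, Subgroup.index_mul_card]
  rw [← Nat.card_eq_fintype_card, ← Nat.card_eq_fintype_card, Nat.card_eq_card_units_add_one F,
    Nat.card_eq_card_units_add_one E, ← hindex]
  push_cast
  ring

variable [DecidableEq F]

theorem card_mul_card_trace_eq_zero :
    Fintype.card F * #{y : E | Algebra.trace F E y = 0} = Fintype.card E := by
  have hdens : ({y | Algebra.trace F E y = 0} : Finset E).dens = ({0} : Finset F).dens :=
    (dens_filter_addMonoidHom_comp (Algebra.trace F E).toAddMonoidHom
      (Algebra.trace_surjective F E) (· = 0)).trans (by simp [filter_eq'])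
  rw [dens_singleton, dens_eq_card_div_card, div_eq_iff (by simp), eq_inv_mul_iff_mul_eq₀
    (by simp)] at hdens
  exact_mod_cast hdens

theorem dens_units_trace_eq_zero [DecidableEq E] :
    (({y | Algebra.trace F E (y : E) = 0} : Finset Eˣ).dens : ℝ) =
      (Fintype.card E - Fintype.card F) / (Fintype.card F * (Fintype.card E - 1)) := by
  have hcard : #{y : E | Algebra.trace F E y = 0} =
      1 + #{y : Eˣ | Algebra.trace F E (y : E) = 0} := by
    rw [card_filter_eq_add_card_filter_units, if_pos (map_zero _)]
  have hE : (Fintype.card E : ℝ) - 1 = Fintype.card Eˣ := by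
    rw [Fintype.card_eq_card_units_add_one (α := E)]
    simp
  have hF : (Fintype.card F : ℝ) ≠ 0 := Nat.cast_ne_zero.2 Fintype.card_ne_zero
  rw [nnratCast_dens, hE, ← div_div, ← card_mul_card_trace_eq_zero F E, hcard]
  congr 1
  field_simp
  push_cast
  ring

theorem dens_normTraceZero [Fintype K] [DecidableEq K] :
    ((normTraceZero F E K).dens : ℝ) =
      (Fintype.card E - Fintype.card F) / (Fintype.card F * (Fintype.card E - 1)) := by
  classical
  rw [← dens_units_trace_eq_zero, normTraceZero]
  congr 1
  exact dens_filter_monoidHom_comp (Units.map (Algebra.norm E (S := K)))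
    (FiniteField.unitsMap_norm_surjective E K) fun y ↦ Algebra.trace F E (y : E) = 0

/-- The lower bound for the weights of the code, as a function of the cardinalities `q`, `Q` and `K`
of the fields `F`, `E` and `K` of the tower. -/
noncomputable def normTraceBound (q Q K : ℝ) : ℝ :=
  (q - 1) * (Q - q) * (K - √(K * Q)) / ((Q - 1) * q ^ 2)

theorem normTraceBound_pos {q Q K : ℝ} (hq : 1 < q) (hQ : q < Q) (hK : Q < K) :
    0 < normTraceBound q Q K := by
  have hsqrt : √(K * Q) < K := (Real.sqrt_lt' (by linarith)).2 (by nlinarith)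
  have := sub_pos.2 hq
  have := sub_pos.2 hQ
  have := sub_pos.2 hsqrt
  have : 0 < Q - 1 := by linarith
  unfold normTraceBound
  positivity

theorem normTraceBound_pow {q : ℝ} (hq : 0 < q) {f k : ℕ} (hk : 2 ≤ k) :
    normTraceBound q (q ^ f) (q ^ k) =
      (q - 1) * (q ^ f - q) * (q ^ (k - 2) - q ^ (((k : ℝ) + f - 4) / 2)) / (q ^ f - 1) := by
  have hsqrt : √(q ^ k * q ^ f) = q ^ (((k : ℝ) + f - 4) / 2) * q ^ 2 := by
    rw [← pow_add, ← Real.rpow_natCast q (k + f), Real.sqrt_eq_rpow, ← Real.rpow_mul hq.le,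
      ← Real.rpow_natCast q 2, ← Real.rpow_add hq]
    congr 1
    push_cast
    ring
  have hpow : q ^ k = q ^ (k - 2) * q ^ 2 := by rw [← pow_add, Nat.sub_add_cancel hk]
  rw [normTraceBound, hsqrt, hpow, ← sub_mul, ← mul_assoc, mul_div_mul_right _ _ (by positivity)]

variable [Fintype K] [DecidableEq K] [Algebra F K] [IsScalarTower F E K]

theorem traceWeight_normTraceZero_deviation_sq_le (b : Kˣ) :
    (Fintype.card F * traceWeight F (normTraceZero F E K) (b : K) -
        (Fintype.card F - 1) * Fintype.card K * (normTraceZero F E K).dens : ℝ) ^ 2 ≤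
      ((Fintype.card F - 1) * (normTraceZero F E K).dens *
        √(Fintype.card K * Fintype.card E)) ^ 2 := by
  have hindex := index_normScalarSubgroup_mul F E K
  have hF : (0 : ℝ) < Fintype.card F - 1 := sub_pos.2 (Nat.one_lt_cast.2 Fintype.one_lt_card)
  have hE : (0 : ℝ) < Fintype.card E - 1 := sub_pos.2 (Nat.one_lt_cast.2 Fintype.one_lt_card)
  refine (traceWeight_deviation_sq_le (range_unitsMap_algebraMap_le_normScalarSubgroup F E K)
    (fun z hz ↦ mul_mem_normTraceZero_iff hz) b).trans_eq ?_
  rw [mul_pow, mul_pow, Real.sq_sqrt (by positivity), dens_normTraceZero,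
    eq_div_of_mul_eq hF.ne' hindex]
  field_simp
  ring

theorem normTraceBound_le_traceWeight (b : Kˣ) :
    normTraceBound (Fintype.card F) (Fintype.card E) (Fintype.card K) ≤
      traceWeight F (normTraceZero F E K) (b : K) := by
  have hF : (1 : ℝ) < Fintype.card F := Nat.one_lt_cast.2 Fintype.one_lt_card
  have hE : (1 : ℝ) < Fintype.card E := Nat.one_lt_cast.2 Fintype.one_lt_card
  have hdev := (abs_le_of_sq_le_sq' (traceWeight_normTraceZero_deviation_sq_le F E K b) (by
    have := sub_pos.2 hF
    positivity)).1
  have hbound : Fintype.card F * normTraceBound (Fintype.card F) (Fintype.card E) (Fintype.card K) =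
      (Fintype.card F - 1) * (normTraceZero F E K).dens *
        (Fintype.card K - √(Fintype.card K * Fintype.card E)) := by
    rw [normTraceBound, dens_normTraceZero]
    have := (sub_pos.2 hE).ne'
    field_simp
  refine le_of_mul_le_mul_left ?_ (zero_lt_one.trans hF)
  rw [hbound]
  linear_combination hdev

end NormTrace

/-- **Theorem 1, bound.** Let `q` be a power of a prime `p`, `f ∣ k`,
`k > f > 1`, and `D = {x ∈ F_{q^k}ˣ : Tr_{q^f/q}(x^{(q^k-1)/(q^f-1)}) = 0}`.  Then for
every `b ∈ F_{q^k}ˣ` the Hamming weight `w(c_b) = #{d ∈ D : Tr_{q^k/q}(bd) ≠ 0}`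
satisfies `w(c_b) ≥ (q-1)(q^f-q)(q^{k-2} − q^{(k+f-4)/2})/(q^f-1)`, this lower bound is
strictly positive, and consequently `b ↦ c_b` is injective, so `C_D` has dimension `k`. -/
theorem stmt5 (p e q f k : ℕ) [Fact p.Prime] (he : 0 < e) (hq : q = p ^ e)
    (hf : 1 < f) (hk : f < k) (hfk : f ∣ k)
    (Fq Ff Fk : Type) [Field Fq] [Field Ff] [Field Fk]
    [Fintype Fq] [Fintype Ff] [Fintype Fk]
    [Algebra Fq Ff] [Algebra Ff Fk] [Algebra Fq Fk] [IsScalarTower Fq Ff Fk]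
    (hcq : Fintype.card Fq = q) (hcf : Fintype.card Ff = q ^ f)
    (hck : Fintype.card Fk = q ^ k)
    (hnorm : ∀ x : Fk,
      algebraMap Ff Fk (Algebra.norm Ff x) = x ^ ((q ^ k - 1) / (q ^ f - 1))) :
    (0 : ℝ) < ((q : ℝ) - 1) * ((q : ℝ) ^ f - q) *
        ((q : ℝ) ^ (k - 2) - (q : ℝ) ^ (((k : ℝ) + f - 4) / 2)) / ((q : ℝ) ^ f - 1) ∧
    (∀ b : Fk, b ≠ 0 →
      ((q : ℝ) - 1) * ((q : ℝ) ^ f - q) *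
          ((q : ℝ) ^ (k - 2) - (q : ℝ) ^ (((k : ℝ) + f - 4) / 2)) / ((q : ℝ) ^ f - 1)
        ≤ (Nat.card {d : Fk // (d ≠ 0 ∧ Algebra.trace Fq Ff (Algebra.norm Ff d) = 0) ∧
            Algebra.trace Fq Fk (b * d) ≠ 0} : ℝ)) ∧
    (∀ b : Fk, b ≠ 0 → ∃ d : Fk,
      (d ≠ 0 ∧ Algebra.trace Fq Ff (Algebra.norm Ff d) = 0) ∧
        Algebra.trace Fq Fk (b * d) ≠ 0) ∧
    Function.Injective
      (fun (b : Fk) (d : {x : Fk // x ≠ 0 ∧ Algebra.trace Fq Ff (Algebra.norm Ff x) = 0}) =>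
        Algebra.trace Fq Fk (b * (d : Fk))) := by
  classical
  have hq1 : (1 : ℝ) < q := by rw [← hcq]; exact_mod_cast Fintype.one_lt_card
  have hpos : 0 < normTraceBound (q : ℝ) (q ^ f) (q ^ k) :=
    normTraceBound_pos hq1 (lt_self_pow₀ hq1 hf) (pow_lt_pow_right₀ hq1 hk)
  have hbound (b : Fk) (hb : b ≠ 0) : normTraceBound (q : ℝ) (q ^ f) (q ^ k) ≤
      Nat.card {d : Fk // (d ≠ 0 ∧ Algebra.trace Fq Ff (Algebra.norm Ff d) = 0) ∧
        Algebra.trace Fq Fk (b * d) ≠ 0} := by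
    simpa [hcq, hcf, hck, traceWeight_normTraceZero] using
      normTraceBound_le_traceWeight Fq Ff Fk (Units.mk0 b hb)
  have hexists (b : Fk) (hb : b ≠ 0) : ∃ d : Fk,
      (d ≠ 0 ∧ Algebra.trace Fq Ff (Algebra.norm Ff d) = 0) ∧
        Algebra.trace Fq Fk (b * d) ≠ 0 :=
    nonempty_subtype.1 (Nat.card_pos_iff.1 (by exact_mod_cast hpos.trans_le (hbound b hb))).1
  rw [← normTraceBound_pow (zero_lt_one.trans hq1) (hf.trans hk)]
  refine ⟨hpos, hbound, hexists, fun b b' h ↦ ?_⟩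
  by_contra hne
  obtain ⟨d, hd, htrace⟩ := hexists (b - b') (sub_ne_zero.2 hne)
  exact htrace (by simpa [sub_mul, sub_eq_zero] using congrFun h ⟨d, hd⟩)
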